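/- For every free ultrafilter u on ℕ there exists a free ultrafilter v on ℕ such that the image ultrafilter of v under f equals u (that is, {X ⊆ ℕ : f⁻¹[X] ∈ v} = u) and no member of v has density zero. (In other words, the extension of f to βℕ maps F_d onto ℕ*.) -/

import Mathlib

/-- A free ultrafilter on `ℕ`: one containing no finite set. -/
def IsFreeUF (u : Ultrafilter ℕ) : Prop := ∀ A ∈ u, Set.Infinite A

/-- The factorial-interval map: `facMap n = k` for the unique `k ≥ 1` with
`k! < n ≤ (k+1)!`, and `facMap n = 0` for `n ≤ 1`. -/
def facMap (n : ℕ) : ℕ :=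
  if n ≤ 1 then 0 else Nat.findGreatest (fun k => Nat.factorial k < n) n

/-- `A ⊆ ℕ` has density zero: `|A ∩ {0,…,n−1}|/n → 0`. -/
def HasDensityZero (A : Set ℕ) : Prop :=
  Filter.Tendsto (fun n : ℕ => ((A ∩ Set.Iio n).ncard : ℝ) / n) Filter.atTop (nhds 0)

/-! The sets of natural density one form a filter, and an ultrafilter contains no set of density
zero exactly when it refines this filter. An ultrafilter `u` is the image under `f` of an
ultrafilter refining `F` as soon as `u` refines the image of `F` under `f`. The fibre of the
factorial-interval map over `k ≥ 1` fills at least a third of an initial segment of `ℕ`, so the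
preimage of an infinite set never has density zero. Hence the image of the density-one filter
consists of cofinite sets only, and every free ultrafilter refines it. -/

open Filter

theorem exists_ultrafilter_le_map_eq {α β : Type*} {f : α → β} {F : Filter α} {u : Ultrafilter β}
    (h : ↑u ≤ F.map f) : ∃ v : Ultrafilter α, ↑v ≤ F ∧ v.map f = u := by
  have hmap : (F ⊓ comap f u).map f = u := by rw [Filter.push_pull, inf_eq_right.2 h]
  have : (F ⊓ comap f u).NeBot := (map_neBot_iff f).1 (by rw [hmap]; exact u.neBot)
  have hle := Ultrafilter.of_le (F ⊓ comap f u)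
  exact ⟨_, hle.trans inf_le_left,
    Ultrafilter.coe_le_coe.1 (map_le_iff_le_comap.2 (hle.trans inf_le_right))⟩

theorem isFreeUF_iff_le_cofinite {u : Ultrafilter ℕ} : IsFreeUF u ↔ (u : Filter ℕ) ≤ cofinite := by
  refine ⟨fun hu A hA => ?_, fun hu A hA hfin => ?_⟩
  · exact Ultrafilter.compl_notMem_iff.1 fun hAc => hu _ hAc hA
  · exact Ultrafilter.compl_notMem_iff.2 hA (hu hfin.compl_mem_cofinite)

namespace HasDensityZero

variable {A B : Set ℕ}

theorem mono (hB : HasDensityZero B) (h : A ⊆ B) : HasDensityZero A := by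
  refine squeeze_zero (fun n => by positivity) (fun n => ?_) hB
  have := Set.ncard_le_ncard (Set.inter_subset_inter_left (Set.Iio n) h)
    ((Set.finite_Iio n).inter_of_right B)
  gcongr

theorem union (hA : HasDensityZero A) (hB : HasDensityZero B) : HasDensityZero (A ∪ B) := by
  refine squeeze_zero (fun n => by positivity) (fun n => ?_) (by simpa using Tendsto.add hA hB)
  rw [← add_div, Set.union_inter_distrib_right]
  gcongr
  exact_mod_cast Set.ncard_union_le _ _

theorem of_finite (hA : A.Finite) : HasDensityZero A := by
  refine squeeze_zero (fun n => by positivity) (fun n => ?_)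
    (tendsto_const_div_atTop_nhds_zero_nat (A.ncard : ℝ))
  have := Set.ncard_le_ncard (Set.inter_subset_left (s := A) (t := Set.Iio n)) hA
  gcongr

end HasDensityZero

theorem not_hasDensityZero_of_frequently_le {A : Set ℕ} {c : ℝ} (hc : 0 < c)
    (h : ∃ᶠ n : ℕ in atTop, c ≤ ((A ∩ Set.Iio n).ncard : ℝ) / n) : ¬ HasDensityZero A :=
  fun hA => h ((hA.eventually_lt_const hc).mono fun _ => not_le_of_gt)

/-- The filter of subsets of `ℕ` of natural density one, encoded as the sets whose complement has
density zero. It turns the absence of density-zero members into refinement of a filter. -/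
def densityOne : Filter ℕ :=
  comk HasDensityZero (.of_finite Set.finite_empty) (fun _ hB _ h => hB.mono h)
    fun _ hA _ hB => hA.union hB

theorem mem_densityOne {A : Set ℕ} : A ∈ densityOne ↔ HasDensityZero Aᶜ :=
  mem_comk

theorem densityOne_le_cofinite : densityOne ≤ cofinite :=
  fun _ hA => mem_densityOne.2 (.of_finite hA)

theorem not_hasDensityZero_of_mem_of_le_densityOne {v : Filter ℕ} [v.NeBot] (hv : v ≤ densityOne)
    {A : Set ℕ} (hA : A ∈ v) : ¬ HasDensityZero A :=
  fun hzero => compl_notMem hA (hv (mem_densityOne.2 (by rwa [compl_compl])))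

theorem facMap_eq_of_mem_Ioc {k n : ℕ} (hn : n ∈ Set.Ioc k.factorial (k + 1).factorial) :
    facMap n = k := by
  obtain ⟨hlt, hle⟩ := hn
  have hpos := Nat.factorial_pos k
  have hself := Nat.self_le_factorial k
  rw [facMap, if_neg (by omega), Nat.findGreatest_eq_iff]
  refine ⟨by omega, fun _ => hlt, fun j hj _ => ?_⟩
  exact (hle.trans (Nat.factorial_le hj)).not_gt

theorem mul_factorial_le_ncard_preimage_facMap {X : Set ℕ} {k : ℕ} (hk : k ∈ X) :
    k * k.factorial ≤ (facMap ⁻¹' X ∩ Set.Iio ((k + 1).factorial + 1)).ncard := by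
  have hsub : Set.Ioc k.factorial (k + 1).factorial ⊆
      facMap ⁻¹' X ∩ Set.Iio ((k + 1).factorial + 1) := fun n hn =>
    ⟨by rwa [Set.mem_preimage, facMap_eq_of_mem_Ioc hn], Nat.lt_succ_of_le hn.2⟩
  calc k * k.factorial = (Set.Ioc k.factorial (k + 1).factorial).ncard := by
        rw [← Finset.coe_Ioc, Set.ncard_coe_finset, Nat.card_Ioc, Nat.factorial_succ, add_mul,
          one_mul, Nat.add_sub_cancel]
    _ ≤ _ := Set.ncard_le_ncard hsub ((Set.finite_Iio _).inter_of_right _)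

theorem one_third_le_density_preimage_facMap {X : Set ℕ} {k : ℕ} (hk : k ∈ X) (hpos : 0 < k) :
    (1 / 3 : ℝ) ≤ ((facMap ⁻¹' X ∩ Set.Iio ((k + 1).factorial + 1)).ncard : ℝ) /
      ((k + 1).factorial + 1 : ℕ) := by
  have hinitial : (k + 1).factorial + 1 ≤ 3 * (k * k.factorial) := by
    have hfac := Nat.factorial_pos k
    have hmul := Nat.le_mul_of_pos_left k.factorial hpos
    rw [Nat.factorial_succ, add_mul, one_mul]
    omega
  have hcard := mul_factorial_le_ncard_preimage_facMap hk
  rw [div_le_div_iff₀ (by norm_num) (by positivity)]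
  norm_cast
  omega

theorem not_hasDensityZero_preimage_facMap {X : Set ℕ} (hX : X.Infinite) :
    ¬ HasDensityZero (facMap ⁻¹' X) := by
  refine not_hasDensityZero_of_frequently_le (c := 1 / 3) (by norm_num)
    (frequently_atTop.2 fun N => ?_)
  obtain ⟨k, hkX, hNk⟩ := hX.exists_gt N
  have hself := Nat.self_le_factorial (k + 1)
  exact ⟨(k + 1).factorial + 1, by omega, one_third_le_density_preimage_facMap hkX (by omega)⟩

theorem cofinite_le_map_facMap_densityOne : cofinite ≤ densityOne.map facMap := by
  intro X hX
  rw [mem_map, mem_densityOne, ← Set.preimage_compl] at hX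
  exact Set.not_infinite.1 fun hinf => not_hasDensityZero_preimage_facMap hinf hX

theorem facMap_maps_Fd_onto_Nstar (u : Ultrafilter ℕ) (hu : IsFreeUF u) :
    ∃ v : Ultrafilter ℕ, IsFreeUF v ∧ Ultrafilter.map facMap v = u ∧
      ∀ A ∈ v, ¬ HasDensityZero A := by
  have hle : ↑u ≤ densityOne.map facMap :=
    (isFreeUF_iff_le_cofinite.1 hu).trans cofinite_le_map_facMap_densityOne
  obtain ⟨v, hv, hmap⟩ := exists_ultrafilter_le_map_eq hle
  exact ⟨v, isFreeUF_iff_le_cofinite.2 (hv.trans densityOne_le_cofinite), hmap,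
    fun _ => not_hasDensityZero_of_mem_of_le_densityOne hv⟩
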